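/- arXiv:0711.3159 — 2 statements merged into one kernel-verified Lean document; each statement's English description precedes it below -/
import Mathlib

section
/- Suppose the real numbers 1, α, β are rationally independent and R is a set of 2-recurrence. Then for every ε > 0 there exists a nonzero r ∈ R such that the fractional part {⌊r·α⌋·r·β} lies in [0,ε] ∪ [1−ε,1). -/
open Filter MeasureTheory

/-- A set `R` of integers is a set of `ℓ`-recurrence if for every invertible measure
preserving system `(X, ℬ, μ, T)` and every measurable set `A` with `μ(A) > 0` there is a
nonzero `r ∈ R` with `μ(A ∩ T^{-r}A ∩ T^{-2r}A ∩ … ∩ T^{-ℓr}A) > 0`. -/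
def IsSetOfMultRecurrence (ℓ : ℕ) (R : Set ℤ) : Prop :=
  ∀ (X : Type) (_ : MeasurableSpace X) (μ : Measure X),
    IsProbabilityMeasure μ →
    ∀ T : X ≃ᵐ X, MeasurePreserving (⇑T) μ μ →
    ∀ A : Set X, MeasurableSet A → 0 < μ A →
      ∃ r ∈ R, r ≠ 0 ∧
        0 < μ (⋂ i ∈ Finset.range (ℓ + 1), (⇑(T.toEquiv ^ ((i : ℤ) * r))) ⁻¹' A)

/-! Put `b = β / 2`. On the four-dimensional torus there is a group extension of the rotation by
`(α, b, α b)` whose `n`-th iterate moves the last coordinate by `n (u - ξ b) + c (y + n b)`, where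
`ξ ∈ [-1/2, 1/2)` lifts `x` and `c` is the integer with `ξ + n α - c ∈ [-1/2, 1/2)`. If the points
at times `0`, `r`, `2 r` of an orbit have `x` close to `0`, then `c` is `0`, `m`, `2 m` for the
integer `m` nearest to `r α`, and the second difference of the last coordinate is
`2 m r b = m r β`. Hence `m r β` is close to `0` modulo `1` for some `r ∈ R`; so is `r β`, because
the orbit also returns in `y`, and `⌊r α⌋` is `m` or `m - 1`. -/

theorem norm_floor_zsmul_le {E : Type*} [SeminormedAddCommGroup E] (t : ℝ) (v : E) :
    ‖⌊t⌋ • v‖ ≤ ‖round t • v‖ + ‖v‖ := by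
  have hfloor : ⌊t⌋ = round t ∨ ⌊t⌋ = round t - 1 := by
    have hle := Int.floor_le_floor (by linarith : t ≤ t + 1 / 2)
    have hge := Int.floor_le_floor (by linarith : t + 1 / 2 ≤ t + 1)
    rw [← round_eq] at hle hge
    rw [Int.floor_add_one] at hge
    lia
  rcases hfloor with h | h <;> rw [h]
  · exact le_add_of_nonneg_right (norm_nonneg v)
  · rw [sub_smul, one_smul]
    exact norm_sub_le _ _

theorem norm_second_difference_le {E : Type*} [SeminormedAddCommGroup E] {a b c : E} {δ : ℝ}
    (ha : ‖a‖ ≤ δ) (hb : ‖b‖ ≤ δ) (hc : ‖c‖ ≤ δ) : ‖(c - b) - (b - a)‖ ≤ 4 * δ := by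
  linarith [norm_sub_le (c - b) (b - a), norm_sub_le c b, norm_sub_le b a]

theorem fract_mem_Icc_union_Ico_iff {t ε : ℝ} :
    Int.fract t ∈ Set.Icc 0 ε ∪ Set.Ico (1 - ε) 1 ↔ ‖(t : UnitAddCircle)‖ ≤ ε := by
  rw [UnitAddCircle.norm_eq, abs_sub_round_eq_min, min_le_iff, sub_le_comm]
  simp [Int.fract_nonneg, Int.fract_lt_one]

theorem IsSetOfMultRecurrence.exists_forall_zpow_mem {ℓ : ℕ} {R : Set ℤ}
    (hR : IsSetOfMultRecurrence ℓ R) {X : Type} [TopologicalSpace X] [MeasurableSpace X]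
    [OpensMeasurableSpace X] {μ : Measure X} [IsProbabilityMeasure μ] [μ.IsOpenPosMeasure]
    {T : X ≃ᵐ X} (hT : MeasurePreserving T μ μ) {U : Set X} (hU : IsOpen U) (hne : U.Nonempty) :
    ∃ r ∈ R, r ≠ 0 ∧ ∃ p, ∀ i ≤ ℓ, (T.toEquiv ^ ((i : ℤ) * r)) p ∈ U := by
  obtain ⟨r, hrR, hr0, hpos⟩ :=
    hR X _ μ inferInstance T hT U hU.measurableSet (hU.measure_pos μ hne)
  obtain ⟨p, hp⟩ := nonempty_of_measure_ne_zero hpos.ne'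
  exact ⟨r, hrR, hr0, p, fun i hi ↦ Set.mem_iInter₂.1 hp i (Finset.mem_range_succ_iff.2 hi)⟩

section SkewTranslation

variable {Y K : Type*} [MeasurableSpace Y] [MeasurableSpace K] [AddGroup K] [MeasurableAdd₂ K]
  [MeasurableSub₂ K]

/-- The group extension of `S` by `K` with cocycle generator `g`, that is, the skew product
`(y, k) ↦ (S y, k + g y)`. -/
def skewTranslation (S : Y ≃ᵐ Y) (g : Y → K) (hg : Measurable g) : Y × K ≃ᵐ Y × K where
  toFun p := (S p.1, p.2 + g p.1)
  invFun p := (S.symm p.1, p.2 - g (S.symm p.1))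
  left_inv p := by simp
  right_inv p := by simp
  measurable_toFun := by dsimp; fun_prop
  measurable_invFun := by dsimp; fun_prop

theorem measurePreserving_skewTranslation {ν : Measure Y} [SFinite ν] {κ : Measure K} [SFinite κ]
    [κ.IsAddRightInvariant] {S : Y ≃ᵐ Y} (hS : MeasurePreserving S ν ν) {g : Y → K}
    (hg : Measurable g) :
    MeasurePreserving (skewTranslation S g hg) (ν.prod κ) (ν.prod κ) :=
  hS.skew_product (g := fun y k ↦ k + g y) (measurable_snd.add (hg.comp measurable_fst))
    (ae_of_all _ fun y ↦ map_add_right_eq_self κ (g y))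

theorem skewTranslation_zpow_apply {S : Y ≃ᵐ Y} {g : Y → K} (hg : Measurable g) {Φ : ℤ → Y → K}
    (hzero : ∀ y, Φ 0 y = 0) (hsucc : ∀ n y, Φ (n + 1) y = Φ n y + g ((S.toEquiv ^ n) y))
    (n : ℤ) (y : Y) (k : K) :
    ((skewTranslation S g hg).toEquiv ^ n) (y, k) = ((S.toEquiv ^ n) y, k + Φ n y) := by
  have hstep (m : ℤ) : (skewTranslation S g hg).toEquiv ((S.toEquiv ^ m) y, k + Φ m y) =
      ((S.toEquiv ^ (m + 1)) y, k + Φ (m + 1) y) := by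
    rw [hsucc, ← add_assoc, add_comm m, zpow_one_add]
    rfl
  induction n with
  | zero => simp [hzero]
  | succ m ih => rw [← hstep, ← ih, ← Equiv.Perm.mul_apply, ← zpow_one_add, add_comm]
  | pred m ih =>
    apply (skewTranslation S g hg).toEquiv.injective
    rw [hstep, sub_add_cancel, ← ih, ← Equiv.Perm.mul_apply, ← zpow_one_add, add_sub_cancel]

end SkewTranslation

/-- The representative in `[-1/2, 1/2)` of a point of the circle `ℝ / ℤ`. -/
noncomputable def centeredLift (x : UnitAddCircle) : ℝ :=
  AddCircle.measurableEquivIco 1 (-1 / 2) x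

@[fun_prop]
theorem measurable_centeredLift : Measurable centeredLift :=
  measurable_subtype_coe.comp (AddCircle.measurableEquivIco 1 (-1 / 2)).measurable

theorem coe_centeredLift (x : UnitAddCircle) : (centeredLift x : UnitAddCircle) = x :=
  (AddCircle.equivIco 1 (-1 / 2)).symm_apply_apply x

theorem centeredLift_coe (s : ℝ) : centeredLift (s : UnitAddCircle) = s - round s := by
  have hmem : s - round s ∈ Set.Ico (-1 / 2 : ℝ) (-1 / 2 + 1) :=
    ⟨by linarith [round_le_add_half s], by linarith [sub_half_lt_round s]⟩
  have hcoe : ((s - round s : ℝ) : UnitAddCircle) = s := by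
    simp
  rw [← hcoe]
  exact AddCircle.equivIco_coe_of_mem hmem

theorem abs_centeredLift (x : UnitAddCircle) : |centeredLift x| = ‖x‖ := by
  rw [← coe_centeredLift x, centeredLift_coe, UnitAddCircle.norm_eq]

/-- The integer by which translating by `t` the centered representative of `x` overshoots the
centered representative of `x + t`. -/
noncomputable def carry (t : ℝ) (x : UnitAddCircle) : ℤ :=
  round (centeredLift x + t)

@[fun_prop]
theorem measurable_carry (t : ℝ) : Measurable (carry t) := by
  unfold carry
  simp only [round_eq]
  fun_prop

theorem centeredLift_add (t : ℝ) (x : UnitAddCircle) :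
    centeredLift (x + t) = centeredLift x + t - carry t x := by
  rw [carry, ← centeredLift_coe, AddCircle.coe_add, coe_centeredLift]

theorem carry_add (s t : ℝ) (x : UnitAddCircle) :
    carry (s + t) x = carry s x + carry t (x + s) := by
  have hcast : (carry (s + t) x : ℝ) = carry s x + carry t (x + s) := by
    have h := centeredLift_add (s + t) x
    rw [AddCircle.coe_add, ← add_assoc, centeredLift_add t, centeredLift_add s] at h
    linarith
  exact_mod_cast hcast

theorem carry_zero (x : UnitAddCircle) : carry 0 x = 0 := by
  simpa using carry_add 0 0 x

theorem carry_eq_round {t : ℝ} {x : UnitAddCircle} (hx : ‖x‖ < 1 / 4) (hxt : ‖x + t‖ < 1 / 4) :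
    carry t x = round t := by
  rw [← abs_centeredLift, abs_lt] at hx hxt
  rw [centeredLift_add] at hxt
  exact (round_eq_iff.2 ⟨by linarith, by linarith⟩).symm

theorem carry_add_self_eq_two_mul_round {t : ℝ} {x : UnitAddCircle} (hx : ‖x‖ < 1 / 4)
    (hxt : ‖x + t‖ < 1 / 4) (hxtt : ‖x + t + t‖ < 1 / 4) : carry (t + t) x = 2 * round t := by
  rw [carry_add, carry_eq_round hx hxt, carry_eq_round hxt hxtt, two_mul]

/-- The rotation `(x, y, u) ↦ (x + α, y + b, u + α b)` of the three-dimensional torus. It is the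
base of the system used for the main theorem; `u - ξ b`, with `ξ` the centered representative of
`x`, then changes along orbits only by integer multiples of `b`. -/
noncomputable def torusRotation (α b : ℝ) :
    UnitAddCircle × UnitAddCircle × UnitAddCircle ≃ᵐ
      UnitAddCircle × UnitAddCircle × UnitAddCircle :=
  MeasurableEquiv.addRight ((α : UnitAddCircle), (b : UnitAddCircle), ((α * b : ℝ) : UnitAddCircle))

theorem torusRotation_zpow_apply (α b : ℝ) (n : ℤ) (x y u : UnitAddCircle) :
    ((torusRotation α b).toEquiv ^ n) (x, y, u) =
      (x + (n * α : ℝ), y + n • (b : UnitAddCircle), u + n • ((α * b : ℝ) : UnitAddCircle)) := by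
  have hzpow : (torusRotation α b).toEquiv ^ n = Equiv.addRight (n • _) := Equiv.zsmul_addRight _ n
  simp [hzpow, ← zsmul_eq_mul]

/-- The total displacement `n (u - ξ b) + c (y + n b)` of the last coordinate after `n` steps of
`bracketShift`, with `ξ` the centered representative of `x` and `c = carry (n α) x`. -/
noncomputable def bracketCocycle (α b : ℝ) (n : ℤ)
    (p : UnitAddCircle × UnitAddCircle × UnitAddCircle) : UnitAddCircle :=
  n • (p.2.2 - (centeredLift p.1 * b : ℝ)) + carry (n * α) p.1 • (p.2.1 + n • (b : UnitAddCircle))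

theorem measurable_bracketCocycle (α b : ℝ) (n : ℤ) : Measurable (bracketCocycle α b n) := by
  unfold bracketCocycle
  fun_prop

theorem bracketCocycle_zero (α b : ℝ) (p : UnitAddCircle × UnitAddCircle × UnitAddCircle) :
    bracketCocycle α b 0 p = 0 := by
  simp [bracketCocycle, carry_zero]

theorem bracketCocycle_add_one (α b : ℝ) (n : ℤ)
    (p : UnitAddCircle × UnitAddCircle × UnitAddCircle) :
    bracketCocycle α b (n + 1) p =
      bracketCocycle α b n p + bracketCocycle α b 1 (((torusRotation α b).toEquiv ^ n) p) := by
  obtain ⟨x, y, u⟩ := p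
  have hcarry : carry ((n + 1 : ℤ) * α) x = carry (n * α) x + carry α (x + (n * α : ℝ)) := by
    rw [← carry_add]
    push_cast
    ring_nf
  have hlift : ((centeredLift (x + (n * α : ℝ)) * b : ℝ) : UnitAddCircle) =
      (centeredLift x * b : ℝ) + n • ((α * b : ℝ) : UnitAddCircle) -
        carry (n * α) x • (b : UnitAddCircle) := by
    rw [centeredLift_add, ← AddCircle.coe_zsmul, ← AddCircle.coe_zsmul, ← AddCircle.coe_add,
      ← AddCircle.coe_sub, zsmul_eq_mul, zsmul_eq_mul]
    ring_nf
  simp only [bracketCocycle, torusRotation_zpow_apply, hcarry, hlift, Int.cast_one, one_mul]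
  module

theorem bracketCocycle_second_difference (α b : ℝ) {r : ℤ} {x : UnitAddCircle}
    (hx₀ : ‖x‖ < 1 / 4) (hx₁ : ‖x + (r * α : ℝ)‖ < 1 / 4)
    (hx₂ : ‖x + ((2 * r : ℤ) * α : ℝ)‖ < 1 / 4) (y u : UnitAddCircle) :
    bracketCocycle α b (2 * r) (x, y, u) - 2 • bracketCocycle α b r (x, y, u) =
      round (r * α) • ((r * (2 * b) : ℝ) : UnitAddCircle) := by
  have hdouble : ((2 * r : ℤ) * α : ℝ) = r * α + r * α := by push_cast; ring
  rw [hdouble, AddCircle.coe_add, ← add_assoc] at hx₂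
  have hcoe : ((r * (2 * b) : ℝ) : UnitAddCircle) = (2 * r) • (b : UnitAddCircle) := by
    rw [← AddCircle.coe_zsmul, zsmul_eq_mul]
    push_cast
    ring_nf
  simp only [bracketCocycle, hdouble, carry_add_self_eq_two_mul_round hx₀ hx₁ hx₂,
    carry_eq_round hx₀ hx₁, hcoe]
  module

/-- The system `((x, y, u), z) ↦ ((x + α, y + b, u + α b), z + (u - ξ b) + c (y + b))` on the
four-dimensional torus, with `ξ` the centered representative of `x` and `c = carry α x`. -/
noncomputable def bracketShift (α b : ℝ) :
    (UnitAddCircle × UnitAddCircle × UnitAddCircle) × UnitAddCircle ≃ᵐ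
      (UnitAddCircle × UnitAddCircle × UnitAddCircle) × UnitAddCircle :=
  skewTranslation (torusRotation α b) (bracketCocycle α b 1) (measurable_bracketCocycle α b 1)

theorem measurePreserving_bracketShift (α b : ℝ) :
    MeasurePreserving (bracketShift α b) volume volume :=
  measurePreserving_skewTranslation
    ((measurePreserving_add_right volume _).prod
      ((measurePreserving_add_right volume _).prod (measurePreserving_add_right volume _))) _

theorem bracketShift_zpow_apply (α b : ℝ) (n : ℤ) (x y u z : UnitAddCircle) :
    ((bracketShift α b).toEquiv ^ n) ((x, y, u), z) =
      ((x + (n * α : ℝ), y + n • (b : UnitAddCircle), u + n • ((α * b : ℝ) : UnitAddCircle)),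
        z + bracketCocycle α b n (x, y, u)) := by
  rw [← torusRotation_zpow_apply]
  exact skewTranslation_zpow_apply _ (bracketCocycle_zero α b) (bracketCocycle_add_one α b) ..

/-- The points of the phase space of `bracketShift` whose coordinates `x`, `y`, `z` are within `δ`
of `0`; the coordinate `u` is free. -/
def bracketNhd (δ : ℝ) : Set ((UnitAddCircle × UnitAddCircle × UnitAddCircle) × UnitAddCircle) :=
  {p | ‖p.1.1‖ < δ ∧ ‖p.1.2.1‖ < δ ∧ ‖p.2‖ < δ}

theorem isOpen_bracketNhd (δ : ℝ) : IsOpen (bracketNhd δ) :=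
  (isOpen_lt continuous_fst.fst.norm continuous_const).inter
    ((isOpen_lt continuous_fst.snd.fst.norm continuous_const).inter
      (isOpen_lt continuous_snd.norm continuous_const))

theorem norm_le_of_forall_zpow_mem_bracketNhd {α b δ : ℝ} (hδ : δ ≤ 1 / 4) {r : ℤ}
    {p : (UnitAddCircle × UnitAddCircle × UnitAddCircle) × UnitAddCircle}
    (hp : ∀ i : ℕ, i ≤ 2 → ((bracketShift α b).toEquiv ^ ((i : ℤ) * r)) p ∈ bracketNhd δ) :
    ‖((r * (2 * b) : ℝ) : UnitAddCircle)‖ ≤ 4 * δ ∧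
      ‖round (r * α) • ((r * (2 * b) : ℝ) : UnitAddCircle)‖ ≤ 4 * δ := by
  obtain ⟨⟨x, y, u⟩, z⟩ := p
  obtain ⟨hx₀, hy₀, hz₀⟩ := hp 0 (by simp)
  obtain ⟨hx₁, hy₁, hz₁⟩ := hp 1 (by simp)
  obtain ⟨hx₂, -, hz₂⟩ := hp 2 (by simp)
  simp only [bracketShift_zpow_apply, Nat.cast_zero, Nat.cast_one, Nat.cast_ofNat, zero_mul,
    one_mul, zero_smul, add_zero, Int.cast_zero, AddCircle.coe_zero, bracketCocycle_zero]
    at hx₀ hx₁ hx₂ hy₀ hy₁ hz₀ hz₁ hz₂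
  constructor
  · have hcoe : ((r * (2 * b) : ℝ) : UnitAddCircle) =
        2 • ((y + r • (b : UnitAddCircle)) - y) := by
      rw [add_sub_cancel_left, ← AddCircle.coe_zsmul, ← AddCircle.coe_nsmul, zsmul_eq_mul,
        nsmul_eq_mul]
      push_cast
      ring_nf
    rw [hcoe, two_nsmul]
    linarith [norm_add_le ((y + r • (b : UnitAddCircle)) - y) ((y + r • (b : UnitAddCircle)) - y),
      norm_sub_le (y + r • (b : UnitAddCircle)) y]
  · rw [← bracketCocycle_second_difference α b (hx₀.trans_le hδ) (hx₁.trans_le hδ)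
      (hx₂.trans_le hδ) y u]
    refine le_of_eq_of_le (congrArg norm ?_) (norm_second_difference_le hz₀.le hz₁.le hz₂.le)
    module

theorem IsSetOfMultRecurrence.exists_norm_le_and_norm_round_zsmul_le {R : Set ℤ}
    (hR : IsSetOfMultRecurrence 2 R) (α β : ℝ) {ε : ℝ} (hε : 0 < ε) :
    ∃ r ∈ R, r ≠ 0 ∧ ‖((r * β : ℝ) : UnitAddCircle)‖ ≤ ε ∧
      ‖round (r * α) • ((r * β : ℝ) : UnitAddCircle)‖ ≤ ε := by
  obtain ⟨δ, hδ₀, hδ⟩ : ∃ δ : ℝ, 0 < δ ∧ δ < min (1 / 4) (ε / 4) :=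
    exists_between (by positivity)
  obtain ⟨hδ₁, hδε⟩ := lt_min_iff.1 hδ
  have : IsProbabilityMeasure (volume : Measure UnitAddCircle) :=
    ⟨by simp [AddCircle.measure_univ]⟩
  obtain ⟨r, hrR, hr₀, p, hp⟩ := hR.exists_forall_zpow_mem
    (measurePreserving_bracketShift α (β / 2)) (isOpen_bracketNhd δ) ⟨0, by simp [bracketNhd, hδ₀]⟩
  obtain ⟨hβ, hround⟩ := norm_le_of_forall_zpow_mem_bracketNhd hδ₁.le hp
  rw [mul_div_cancel₀ β two_ne_zero] at hβ hround
  exact ⟨r, hrR, hr₀, by linarith, by linarith⟩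

theorem statement12_general (α β : ℝ) (R : Set ℤ) (hR : IsSetOfMultRecurrence 2 R)
    (ε : ℝ) (hε : 0 < ε) :
    ∃ r ∈ R, r ≠ 0 ∧
      Int.fract ((⌊(r : ℝ) * α⌋ : ℝ) * (r : ℝ) * β) ∈
        Set.Icc 0 ε ∪ Set.Ico (1 - ε) 1 := by
  obtain ⟨r, hrR, hr₀, hβ, hround⟩ := hR.exists_norm_le_and_norm_round_zsmul_le α β (half_pos hε)
  refine ⟨r, hrR, hr₀, fract_mem_Icc_union_Ico_iff.2 ?_⟩
  rw [mul_assoc, ← zsmul_eq_mul, AddCircle.coe_zsmul]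
  linarith [norm_floor_zsmul_le (r * α) ((r * β : ℝ) : UnitAddCircle)]

theorem statement12 (α β : ℝ)
    (hind : ∀ a b c : ℚ, (a : ℝ) + (b : ℝ) * α + (c : ℝ) * β = 0 →
      a = 0 ∧ b = 0 ∧ c = 0)
    (R : Set ℤ) (hR : IsSetOfMultRecurrence 2 R)
    (ε : ℝ) (hε : 0 < ε) :
    ∃ r ∈ R, r ≠ 0 ∧
      Int.fract ((⌊(r : ℝ) * α⌋ : ℝ) * (r : ℝ) * β) ∈
        Set.Icc 0 ε ∪ Set.Ico (1 - ε) 1 :=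
  statement12_general α β R hR ε hε
end

section
/- Let ℓ, d ∈ ℕ and let T be an ℓ-step unipotent affine transformation of the torus 𝕋^d = ℝ^d/ℤ^d, i.e. T(x) = M·x + b where b ∈ 𝕋^d and M is a d×d integer matrix inducing an endomorphism of 𝕋^d with (M − I)^ℓ = 0. Let β be an irrational number, let s ∈ ℕ, and let k, k₁, …, k_s be distinct positive integers. Then for every x ∈ 𝕋^d, every continuous f : 𝕋^d → ℂ, and all continuous 1-periodic h₁,…,h_s : ℝ → ℂ, both limits lim_{N→∞} (1/N)·Σ_{n=1}^N h₁((n^{ℓk₁}+n^{k₁})β)·…·h_s((n^{ℓk_s}+n^{k_s})β)·f(T^{n^k}x) and lim_{N→∞} (1/N)·Σ_{n=1}^N f(T^{n^k}x) exist, and the first equals (∫₀¹h₁ dt)·…·(∫₀¹h_s dt) times the second. -/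
open Filter MeasureTheory

open Topology Polynomial
open scoped FourierTransform RealInnerProductSpace fwdDiff

/-!
By Weyl's criterion it is enough to average products of a character of the auxiliary torus, which
carries the points `((n ^ (ℓ κ₁) + n ^ κ₁) β, …, (n ^ (ℓ κₛ) + n ^ κₛ) β)`, and a character of the
original torus. Since `(M - 1) ^ ℓ = 0`, the orbit `n ↦ T ^ n x` is annihilated by `ℓ + 1`
differences, so by Newton's formula its coordinates are real polynomials of degree at most `ℓ` in
`n`, and a character along `T ^ (n ^ k) x` is `e(q(n ^ k))` with `deg q ≤ ℓ`. Because the `κ i` are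
distinct and different from `k`, a nontrivial character of the auxiliary torus contributes an
exponent, some `ℓ κ i` or `κ i`, that `q(X ^ k)` cannot reach; its coefficient is a nonzero integer
multiple of `β`. By Weyl's theorem on polynomial phases, which rests on van der Corput's inequality,
the average then tends to zero, so that the two factors are asymptotically uncorrelated.
-/

section CesaroMean

variable {E F : Type*} [NormedAddCommGroup E] [NormedSpace ℝ E]
  [NormedAddCommGroup F] [NormedSpace ℝ F]

/-- The average of the first `N` terms of a sequence, with junk value `0` at `N = 0`. -/
noncomputable def cesaroMean (u : ℕ → E) (N : ℕ) : E := (N : ℝ)⁻¹ • ∑ n ∈ Finset.range N, u n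

lemma cesaroMean_add (u v : ℕ → E) (N : ℕ) :
    cesaroMean (fun n => u n + v n) N = cesaroMean u N + cesaroMean v N := by
  simp only [cesaroMean, Finset.sum_add_distrib, smul_add]

lemma cesaroMean_sub (u v : ℕ → E) (N : ℕ) :
    cesaroMean (fun n => u n - v n) N = cesaroMean u N - cesaroMean v N := by
  simp only [cesaroMean, Finset.sum_sub_distrib, smul_sub]

lemma cesaroMean_const (c : E) {N : ℕ} (hN : N ≠ 0) : cesaroMean (fun _ => c) N = c := by
  have hN' : (N : ℝ) ≠ 0 := Nat.cast_ne_zero.2 hN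
  simp [cesaroMean, ← Nat.cast_smul_eq_nsmul ℝ, hN']

lemma map_cesaroMean (L : E →ₗ[ℝ] F) (u : ℕ → E) (N : ℕ) :
    L (cesaroMean u N) = cesaroMean (fun n => L (u n)) N := by
  simp only [cesaroMean, map_smul, map_sum]

lemma cesaroMean_const_mul (c : ℂ) (u : ℕ → ℂ) (N : ℕ) :
    cesaroMean (fun n => c * u n) N = c * cesaroMean u N :=
  (map_cesaroMean (LinearMap.mulLeft ℝ c) u N).symm

lemma cesaroMean_comm (u : ℕ → ℕ → E) (H N : ℕ) :
    cesaroMean (fun n => cesaroMean (fun i => u n i) H) N =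
      cesaroMean (fun i => cesaroMean (fun n => u n i) N) H := by
  simp only [cesaroMean, ← Finset.smul_sum, smul_comm (N : ℝ)⁻¹]
  rw [Finset.sum_comm]

lemma cesaroMean_mono {u v : ℕ → ℝ} (huv : ∀ n, u n ≤ v n) (N : ℕ) :
    cesaroMean u N ≤ cesaroMean v N := by
  simp only [cesaroMean]
  gcongr with n
  exact huv n

lemma norm_cesaroMean_le {u : ℕ → E} {K : ℝ} (hu : ∀ n, ‖u n‖ ≤ K) (N : ℕ) :
    ‖cesaroMean u N‖ ≤ K := by
  rcases eq_or_ne N 0 with rfl | hN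
  · simpa [cesaroMean] using (norm_nonneg _).trans (hu 0)
  · calc ‖cesaroMean u N‖ ≤ (N : ℝ)⁻¹ * ∑ _n ∈ Finset.range N, K := by
          rw [cesaroMean, norm_smul, norm_inv, Real.norm_natCast]
          gcongr
          exact norm_sum_le_of_le _ fun n _ => hu n
      _ = K := cesaroMean_const K hN

lemma norm_cesaroMean_sq_le (u : ℕ → E) (N : ℕ) :
    ‖cesaroMean u N‖ ^ 2 ≤ cesaroMean (fun n => ‖u n‖ ^ 2) N := by
  rcases eq_or_ne N 0 with rfl | hN
  · simp [cesaroMean]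
  · have hN' : (N : ℝ) ≠ 0 := Nat.cast_ne_zero.2 hN
    calc ‖cesaroMean u N‖ ^ 2
        ≤ ((N : ℝ)⁻¹ * ∑ n ∈ Finset.range N, ‖u n‖) ^ 2 := by
          rw [cesaroMean, norm_smul, norm_inv, Real.norm_natCast]
          gcongr
          exact norm_sum_le _ _
      _ = (N : ℝ)⁻¹ ^ 2 * (∑ n ∈ Finset.range N, ‖u n‖) ^ 2 := mul_pow _ _ _
      _ ≤ (N : ℝ)⁻¹ ^ 2 * (N * ∑ n ∈ Finset.range N, ‖u n‖ ^ 2) := by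
          gcongr
          simpa using sq_sum_le_card_mul_sum_sq (s := Finset.range N) (f := fun n => ‖u n‖)
      _ = cesaroMean (fun n => ‖u n‖ ^ 2) N := by
          rw [cesaroMean, smul_eq_mul]
          field_simp

lemma tendsto_cesaroMean_const (c : E) : Tendsto (cesaroMean fun _ => c) atTop (𝓝 c) :=
  tendsto_const_nhds.congr' <| (eventually_ne_atTop 0).mono fun _ hN => (cesaroMean_const c hN).symm

lemma tendsto_cesaroMean_of_forall_tendsto {α : Type*} {l : Filter α} {a : α → ℕ → E} {b : ℕ → E}
    (h : ∀ i, Tendsto (fun x => a x i) l (𝓝 (b i))) (H : ℕ) :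
    Tendsto (fun x => cesaroMean (a x) H) l (𝓝 (cesaroMean b H)) :=
  (tendsto_finsetSum _ fun i _ => h i).const_smul _

lemma tendsto_cesaroMean_zero_of_norm_sum_le {u : ℕ → E} {K : ℝ}
    (hu : ∀ N, ‖∑ n ∈ Finset.range N, u n‖ ≤ K) : Tendsto (cesaroMean u) atTop (𝓝 0) := by
  have hK : Tendsto (fun N : ℕ => (N : ℝ)⁻¹ * K) atTop (𝓝 0) := by
    simpa using (tendsto_inv_atTop_nhds_zero_nat (𝕜 := ℝ)).mul_const K
  refine squeeze_zero_norm (fun N => ?_) hK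
  rw [cesaroMean, norm_smul, norm_inv, Real.norm_natCast]
  gcongr
  exact hu N

lemma tendsto_cesaroMean_shift_sub {u : ℕ → E} {K : ℝ} (hu : ∀ n, ‖u n‖ ≤ K) (h : ℕ) :
    Tendsto (fun N => cesaroMean (fun n => u (n + h)) N - cesaroMean u N) atTop (𝓝 0) := by
  simp only [← cesaroMean_sub]
  refine tendsto_cesaroMean_zero_of_norm_sum_le (K := h * K + h * K) fun N => ?_
  have boundary_terms : ∑ n ∈ Finset.range N, (u (n + h) - u n) =
      ∑ n ∈ Finset.range h, u (N + n) - ∑ n ∈ Finset.range h, u n := by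
    have hsum := (Finset.sum_range_add u h N).symm.trans
      ((congrArg (fun M => ∑ n ∈ Finset.range M, u n) (add_comm h N)).trans
        (Finset.sum_range_add u N h))
    simp only [add_comm h] at hsum
    rw [Finset.sum_sub_distrib, sub_eq_sub_iff_add_eq_add, add_comm, hsum, add_comm]
  rw [boundary_terms]
  refine (norm_sub_le _ _).trans (add_le_add ?_ ?_)
  · simpa using norm_sum_le_of_le (Finset.range h) fun n _ => hu (N + n)
  · simpa using norm_sum_le_of_le (Finset.range h) fun n _ => hu n

lemma tendsto_cesaroMean_shift {u : ℕ → E} {K : ℝ} (hu : ∀ n, ‖u n‖ ≤ K) (h : ℕ) {L : E}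
    (hL : Tendsto (cesaroMean u) atTop (𝓝 L)) :
    Tendsto (cesaroMean fun n => u (n + h)) atTop (𝓝 L) := by
  simpa using (tendsto_cesaroMean_shift_sub hu h).add hL

lemma tendsto_inv_mul_sum_Icc {u : ℕ → ℂ} {K : ℝ} (hu : ∀ n, ‖u n‖ ≤ K) {L : ℂ}
    (hL : Tendsto (cesaroMean u) atTop (𝓝 L)) :
    Tendsto (fun N : ℕ => (N : ℂ)⁻¹ * ∑ n ∈ Finset.Icc 1 N, u n) atTop (𝓝 L) := by
  refine (tendsto_cesaroMean_shift hu 1 hL).congr fun N => ?_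
  rw [cesaroMean, Finset.range_eq_Ico, Finset.sum_Ico_add' u 0 N 1, Complex.real_smul]
  push_cast
  rfl

lemma exists_tendsto_cesaroMean_of_periodic {u : ℕ → E} {q : ℕ} (hq : q ≠ 0)
    (hu : Function.Periodic u q) : ∃ L, Tendsto (cesaroMean u) atTop (𝓝 L) := by
  set L := cesaroMean u q
  set S : ℕ → E := fun N => ∑ n ∈ Finset.range N, (u n - L)
  have sum_period : S q = 0 := by
    have hmean : cesaroMean (fun n => u n - L) q = 0 := by
      rw [cesaroMean_sub, cesaroMean_const L hq, sub_self]
    exact (smul_eq_zero.1 hmean).resolve_left (inv_ne_zero (Nat.cast_ne_zero.2 hq))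
  have S_periodic : Function.Periodic S q := fun N => by
    have tail : ∀ n, u (q + n) = u n := fun n => by rw [add_comm, hu]
    simp only [S, add_comm N q, Finset.sum_range_add, tail]
    exact (congrArg (· + _) sum_period).trans (zero_add _)
  have S_bounded : ∀ N, ‖S N‖ ≤ ∑ m ∈ Finset.range q, ‖S m‖ := fun N => by
    rw [← S_periodic.map_mod_nat N]
    exact Finset.single_le_sum (f := fun m => ‖S m‖) (fun _ _ => norm_nonneg _)
      (Finset.mem_range.2 (Nat.mod_lt N (Nat.pos_of_ne_zero hq)))
  refine ⟨L, ?_⟩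
  simpa [cesaroMean_sub] using
    (tendsto_cesaroMean_zero_of_norm_sum_le S_bounded).add (tendsto_cesaroMean_const L)

lemma tendsto_cesaroMean_zero_of_shift_eq_mul {u : ℕ → ℂ} {K : ℝ} (hK : ∀ n, ‖u n‖ ≤ K) {q : ℕ}
    {ζ : ℂ} (hζ : ζ ≠ 1) (hu : ∀ n, u (n + q) = ζ * u n) :
    Tendsto (cesaroMean u) atTop (𝓝 0) := by
  have hmul : Tendsto (fun N => (ζ - 1) * cesaroMean u N) atTop (𝓝 0) :=
    (tendsto_cesaroMean_shift_sub hK q).congr fun N => by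
      simp only [hu, cesaroMean_const_mul]
      ring
  simpa [sub_ne_zero.2 hζ] using hmul.const_mul (ζ - 1)⁻¹

end CesaroMean

section VanDerCorput

variable {E : Type*} [NormedAddCommGroup E] [InnerProductSpace ℝ E]

lemma norm_cesaroMean_sq_eq (u : ℕ → E) (N : ℕ) :
    ‖cesaroMean u N‖ ^ 2 = cesaroMean (fun i => cesaroMean (fun j => ⟪u i, u j⟫) N) N := by
  rw [← real_inner_self_eq_norm_sq]
  have inner_mean : ∀ i, cesaroMean (fun j => ⟪u i, u j⟫) N = ⟪u i, cesaroMean u N⟫ := fun i =>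
    (map_cesaroMean (innerₗ E (u i)) u N).symm
  simp only [inner_mean]
  exact map_cesaroMean ((innerₗ E).flip (cesaroMean u N)) u N

lemma tendsto_cesaroMean_sub_window {u : ℕ → E} {K : ℝ} (hu : ∀ n, ‖u n‖ ≤ K) {H : ℕ}
    (hH : H ≠ 0) :
    Tendsto (fun N => cesaroMean (fun n => cesaroMean (fun i => u (n + i)) H) N - cesaroMean u N)
      atTop (𝓝 0) := by
  have shifts := tendsto_cesaroMean_of_forall_tendsto
    (fun i => tendsto_cesaroMean_shift_sub hu i) H
  rw [cesaroMean_const 0 hH] at shifts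
  refine shifts.congr fun N => ?_
  rw [cesaroMean_sub, cesaroMean_const _ hH, cesaroMean_comm]

lemma tendsto_cesaroMean_inner_shift {u : ℕ → E} {K : ℝ} (hu : ∀ n, ‖u n‖ ≤ K)
    (hcor : ∀ h, 0 < h → Tendsto (cesaroMean fun n => ⟪u n, u (n + h)⟫) atTop (𝓝 0))
    {i j : ℕ} (hij : i ≠ j) :
    Tendsto (cesaroMean fun n => ⟪u (n + i), u (n + j)⟫) atTop (𝓝 0) := by
  wlog hlt : i < j generalizing i j
  · simpa only [real_inner_comm] using this hij.symm (hij.lt_or_gt.resolve_left hlt)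
  have hbound : ∀ n, ‖⟪u n, u (n + (j - i))⟫‖ ≤ K * K := fun n =>
    (norm_inner_le_norm _ _).trans
      (mul_le_mul (hu _) (hu _) (norm_nonneg _) ((norm_nonneg _).trans (hu 0)))
  simpa only [add_assoc, Nat.add_sub_cancel' hlt.le] using
    tendsto_cesaroMean_shift hbound i (hcor (j - i) (Nat.sub_pos_of_lt hlt))

lemma cesaroMean_cesaroMean_ite_eq (c : ℝ) (H : ℕ) :
    cesaroMean (fun i => cesaroMean (fun j => if i = j then c else 0) H) H = c / H := by
  rcases eq_or_ne H 0 with rfl | hH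
  · simp [cesaroMean]
  have hH' : (H : ℝ) ≠ 0 := Nat.cast_ne_zero.2 hH
  simp only [cesaroMean, Finset.sum_ite_eq]
  rw [Finset.sum_congr rfl fun i hi => by rw [if_pos hi]]
  simp only [Finset.sum_const, Finset.card_range, nsmul_eq_mul, smul_eq_mul]
  field_simp

lemma cesaroMean_norm_window_sq_le {u : ℕ → E} {K : ℝ} (hu : ∀ n, ‖u n‖ ≤ K) (H N : ℕ) :
    cesaroMean (fun n => ‖cesaroMean (fun i => u (n + i)) H‖ ^ 2) N ≤
      K ^ 2 / H + cesaroMean (fun i => cesaroMean (fun j =>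
        if i = j then 0 else cesaroMean (fun n => ⟪u (n + i), u (n + j)⟫) N) H) H := by
  have hterm : ∀ i j, cesaroMean (fun n => ⟪u (n + i), u (n + j)⟫) N ≤
      (if i = j then K ^ 2 else 0) +
        if i = j then 0 else cesaroMean (fun n => ⟪u (n + i), u (n + j)⟫) N := by
    intro i j
    split_ifs with hij
    · subst hij
      rw [add_zero]
      refine (Real.le_norm_self _).trans (norm_cesaroMean_le (fun n => ?_) N)
      rw [real_inner_self_eq_norm_sq, norm_pow, norm_norm]
      gcongr
      exact hu _
    · rw [zero_add]
  simp only [norm_cesaroMean_sq_eq]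
  rw [cesaroMean_comm, ← cesaroMean_cesaroMean_ite_eq, ← cesaroMean_add]
  refine cesaroMean_mono (fun i => ?_) H
  rw [cesaroMean_comm, ← cesaroMean_add]
  exact cesaroMean_mono (hterm i) H

-- On average `u` agrees with its mean over windows of length `H`, whose mean square consists of a
-- diagonal part, at most `K ^ 2 / H`, and of off-diagonal correlations, which vanish in the limit.
theorem tendsto_cesaroMean_zero_of_correlation {u : ℕ → E} {K : ℝ} (hu : ∀ n, ‖u n‖ ≤ K)
    (hcor : ∀ h, 0 < h → Tendsto (cesaroMean fun n => ⟪u n, u (n + h)⟫) atTop (𝓝 0)) :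
    Tendsto (cesaroMean u) atTop (𝓝 0) := by
  rw [Metric.tendsto_nhds]
  intro ε hε
  obtain ⟨H, hH⟩ := exists_nat_gt (K ^ 2 / (ε / 2) ^ 2)
  have hH0 : (0 : ℝ) < H := lt_of_le_of_lt (by positivity) hH
  set window : ℕ → E := fun n => cesaroMean (fun i => u (n + i)) H
  have offdiag : Tendsto (fun N => cesaroMean (fun i => cesaroMean (fun j =>
      if i = j then 0 else cesaroMean (fun n => ⟪u (n + i), u (n + j)⟫) N) H) H) atTop (𝓝 0) := by
    have entry : ∀ i j, Tendsto (fun N =>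
        if i = j then 0 else cesaroMean (fun n => ⟪u (n + i), u (n + j)⟫) N) atTop (𝓝 0) := by
      intro i j
      split_ifs with hij
      · exact tendsto_const_nhds
      · exact tendsto_cesaroMean_inner_shift hu hcor hij
    simpa [cesaroMean] using tendsto_cesaroMean_of_forall_tendsto
      (fun i => tendsto_cesaroMean_of_forall_tendsto (entry i) H) H
  have window_small : ∀ᶠ N in atTop, ‖cesaroMean window N‖ < ε / 2 := by
    have hlt : K ^ 2 / H + 0 < (ε / 2) ^ 2 := by
      rwa [add_zero, div_lt_comm₀ hH0 (by positivity)]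
    filter_upwards [(offdiag.const_add (K ^ 2 / H)).eventually_lt_const hlt] with N hN
    exact lt_of_pow_lt_pow_left₀ 2 (by positivity) <|
      ((norm_cesaroMean_sq_le window N).trans (cesaroMean_norm_window_sq_le hu H N)).trans_lt hN
  have window_close := Metric.tendsto_nhds.1
    (tendsto_cesaroMean_sub_window hu (Nat.cast_pos.1 hH0).ne') (ε / 2) (half_pos hε)
  filter_upwards [window_small, window_close] with N hsmall hclose
  rw [dist_zero_right] at hclose ⊢
  calc ‖cesaroMean u N‖ = ‖cesaroMean window N - (cesaroMean window N - cesaroMean u N)‖ := by simp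
    _ ≤ ‖cesaroMean window N‖ + ‖cesaroMean window N - cesaroMean u N‖ := norm_sub_le _ _
    _ < ε := by linarith

end VanDerCorput

section Weyl

lemma fourierChar_eq_one_iff {x : ℝ} : 𝐞 x = 1 ↔ ∃ n : ℤ, x = n := by
  rw [Real.fourierChar_apply', Circle.exp_eq_one]
  refine exists_congr fun n => ?_
  rw [mul_comm, mul_left_inj' Real.two_pi_pos.ne']

lemma fourierChar_ne_one_of_irrational {x : ℝ} (hx : Irrational x) : 𝐞 x ≠ 1 := fun h =>
  let ⟨n, hn⟩ := fourierChar_eq_one_iff.1 h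
  hx.ne_int n hn

lemma fourierChar_congr {x y : ℝ} {m : ℤ} (h : x - y = m) : 𝐞 x = 𝐞 y := by
  rw [← sub_add_cancel x y, AddChar.map_add_eq_mul, fourierChar_eq_one_iff.2 ⟨m, h⟩, one_mul]

-- With `D` a common denominator of `R`, the polynomial `D R` has integer coefficients, so that
-- its values at points congruent modulo `D` differ by a multiple of `D`.
lemma exists_periodic_fourierChar_eval (R : ℚ[X]) :
    ∃ q : ℕ, q ≠ 0 ∧
      Function.Periodic (fun n : ℕ => 𝐞 ((R.map (algebraMap ℚ ℝ)).eval (n : ℝ))) q := by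
  obtain ⟨D, hD, hP⟩ := IsLocalization.integerNormalization_spec (nonZeroDivisors ℤ) R
  set P := IsLocalization.integerNormalization (nonZeroDivisors ℤ) R
  have hD0 : D ≠ 0 := nonZeroDivisors.ne_zero hD
  have eval_P : ∀ n : ℕ,
      ((P.eval (n : ℤ) : ℤ) : ℝ) = D * (R.map (algebraMap ℚ ℝ)).eval (n : ℝ) := by
    intro n
    have eval_eq := congrArg (fun p : ℚ[X] => (p.map (algebraMap ℚ ℝ)).eval (n : ℝ)) hP
    simpa [Polynomial.eval_map, ← aeval_def, eval₂_at_natCast,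
      Polynomial.map_map, zsmul_eq_mul] using eval_eq
  refine ⟨D.natAbs, Int.natAbs_ne_zero.2 hD0, fun n => ?_⟩
  obtain ⟨m, hm⟩ : D ∣ P.eval ((n + D.natAbs : ℕ) : ℤ) - P.eval (n : ℤ) :=
    (Int.dvd_natAbs.2 dvd_rfl).trans (by simpa using sub_dvd_eval_sub (n + D.natAbs : ℤ) n P)
  refine fourierChar_congr (m := m) (mul_left_cancel₀ (Int.cast_ne_zero.2 hD0 : (D : ℝ) ≠ 0) ?_)
  rw [mul_sub, ← eval_P, ← eval_P]
  exact_mod_cast hm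

lemma coeff_taylor_sub {R : Type*} [CommRing R] {P : R[X]} {j : ℕ}
    (hP : P.natDegree ≤ j + 1) (h : R) :
    (taylor h P - P).coeff j = (j + 1) * P.coeff (j + 1) * h := by
  have hdeg : (hasseDeriv j P).natDegree < 2 :=
    (natDegree_hasseDeriv_le P j).trans_lt (by lia)
  rw [coeff_sub, taylor_coeff, eval_eq_sum_range' hdeg]
  simp [Finset.sum_range_succ, hasseDeriv_coeff, add_comm 1 j]

lemma natDegree_taylor_sub_le {R : Type*} [CommRing R] {P : R[X]} {j : ℕ}
    (hP : P.natDegree ≤ j + 1) (h : R) : (taylor h P - P).natDegree ≤ j := by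
  refine natDegree_le_iff_coeff_eq_zero.2 fun i hi => ?_
  rw [coeff_taylor_sub (by lia), coeff_eq_zero_of_natDegree_lt (by lia), mul_zero, zero_mul]

lemma tendsto_cesaroMean_fourierChar_of_differences {u : ℕ → ℝ}
    (hu : ∀ h, 0 < h →
      Tendsto (cesaroMean fun n => (𝐞 (u (n + h) - u n) : ℂ)) atTop (𝓝 0)) :
    Tendsto (cesaroMean fun n => (𝐞 (u n) : ℂ)) atTop (𝓝 0) := by
  refine tendsto_cesaroMean_zero_of_correlation (fun n => (Circle.norm_coe _).le) fun h hh => ?_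
  have hre := (Complex.continuous_re.tendsto 0).comp (hu h hh)
  refine hre.congr fun N => ?_
  rw [Function.comp_apply, ← Complex.reLm_coe, map_cesaroMean]
  simp only [Complex.reLm_coe, Complex.inner, sub_eq_add_neg, AddChar.map_add_eq_mul,
    AddChar.map_neg_eq_inv, Circle.coe_mul, Circle.coe_inv_eq_conj]

lemma tendsto_cesaroMean_fourierChar_rat_add_linear (R : ℚ[X]) {L : ℝ[X]} (hL : L.natDegree ≤ 1)
    (hirr : Irrational (L.coeff 1)) :
    Tendsto (cesaroMean fun n : ℕ =>
      (𝐞 ((R.map (algebraMap ℚ ℝ) + L).eval (n : ℝ)) : ℂ)) atTop (𝓝 0) := by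
  obtain ⟨q, hq, hR⟩ := exists_periodic_fourierChar_eval R
  have hζ : (𝐞 (L.coeff 1 * q) : ℂ) ≠ 1 := by
    exact Circle.coe_eq_one.not.2 (fourierChar_ne_one_of_irrational (hirr.mul_natCast hq))
  refine tendsto_cesaroMean_zero_of_shift_eq_mul (fun n => (Circle.norm_coe _).le) hζ (q := q)
    fun n => ?_
  have hR_eval : 𝐞 ((R.map (algebraMap ℚ ℝ)).eval ((n + q : ℕ) : ℝ)) =
      𝐞 ((R.map (algebraMap ℚ ℝ)).eval (n : ℝ)) := hR n
  have L_affine : ∀ y, L.eval y = L.coeff 1 * y + L.coeff 0 := fun y => by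
    conv_lhs => rw [eq_X_add_C_of_natDegree_le_one hL]
    simp only [eval_add, eval_mul, eval_C, eval_X]
  have hL_eval : L.eval ((n + q : ℕ) : ℝ) = L.coeff 1 * q + L.eval (n : ℝ) := by
    rw [L_affine, L_affine]
    push_cast
    ring
  rw [eval_add, eval_add, hL_eval, add_left_comm, AddChar.map_add_eq_mul, Circle.coe_mul,
    AddChar.map_add_eq_mul, AddChar.map_add_eq_mul, hR_eval]

lemma tendsto_cesaroMean_fourierChar_rat_add (j : ℕ) (R : ℚ[X]) {L : ℝ[X]}
    (hL : L.natDegree ≤ j + 1) (hirr : Irrational (L.coeff (j + 1))) :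
    Tendsto (cesaroMean fun n : ℕ =>
      (𝐞 ((R.map (algebraMap ℚ ℝ) + L).eval (n : ℝ)) : ℂ)) atTop (𝓝 0) := by
  induction j generalizing R L with
  | zero => exact tendsto_cesaroMean_fourierChar_rat_add_linear R hL hirr
  | succ j ih =>
    refine tendsto_cesaroMean_fourierChar_of_differences fun h hh => ?_
    have hcoeff : Irrational ((taylor (h : ℝ) L - L).coeff (j + 1)) := by
      rw [coeff_taylor_sub hL, mul_right_comm, mul_comm]
      exact_mod_cast hirr.mul_natCast (m := (j + 1 + 1) * h) (by positivity)
    refine (ih (taylor (h : ℚ) R - R) (natDegree_taylor_sub_le hL _) hcoeff).congr fun N => ?_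
    simp only [Polynomial.map_sub, map_taylor, eval_add, eval_sub, taylor_eval, map_natCast,
      Nat.cast_add, add_sub_add_comm]

lemma exists_eq_map_add_of_coeff_mem_range {K L : Type*} [Semiring K] [Ring L] {φ : K →+* L}
    {P : L[X]} {j : ℕ} (hP : ∀ i, j < i → P.coeff i ∈ Set.range φ) :
    ∃ (R : K[X]) (Q : L[X]), P = R.map φ + Q ∧ Q.natDegree ≤ j ∧ Q.coeff j = P.coeff j := by
  set Q : L[X] := ∑ i ∈ Finset.range (j + 1), monomial i (P.coeff i)
  have coeff_Q : ∀ i, Q.coeff i = if i < j + 1 then P.coeff i else 0 := fun i => by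
    simp [Q, finsetSum_coeff, coeff_monomial]
  have hlift : P - Q ∈ lifts φ := by
    rw [lifts_iff_coeff_lifts]
    intro i
    rw [coeff_sub, coeff_Q]
    split_ifs with hi
    · exact ⟨0, by simp⟩
    · simpa using hP i (by lia)
  obtain ⟨R, hR⟩ := (mem_lifts _).1 hlift
  exact ⟨R, Q, by rw [hR, sub_add_cancel],
    natDegree_le_iff_coeff_eq_zero.2 fun i hi => by rw [coeff_Q, if_neg (by lia)],
    by simp [coeff_Q]⟩

theorem tendsto_cesaroMean_fourierChar_polynomial {P : ℝ[X]} {i : ℕ} (hi : 0 < i)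
    (hirr : Irrational (P.coeff i)) :
    Tendsto (cesaroMean fun n : ℕ => (𝐞 (P.eval (n : ℝ)) : ℂ)) atTop (𝓝 0) := by
  classical
  have le_natDegree : ∀ m, Irrational (P.coeff m) → m ≤ P.natDegree := fun m hm =>
    le_natDegree_of_ne_zero hm.ne_zero
  set j := Nat.findGreatest (fun m => Irrational (P.coeff m)) P.natDegree
  have hij : i ≤ j := Nat.le_findGreatest (le_natDegree i hirr) hirr
  have hjirr : Irrational (P.coeff j) :=
    Nat.findGreatest_spec (P := fun m => Irrational (P.coeff m)) (le_natDegree i hirr) hirr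
  have rational_above : ∀ m, j < m → P.coeff m ∈ Set.range (algebraMap ℚ ℝ) := fun m hm =>
    not_not.1 fun h => Nat.findGreatest_is_greatest hm (le_natDegree m h) h
  obtain ⟨R, L, rfl, hdeg, hcoeff⟩ := exists_eq_map_add_of_coeff_mem_range rational_above
  obtain ⟨l, hl⟩ : ∃ l, j = l + 1 := Nat.exists_eq_succ_of_ne_zero (hi.trans_le hij).ne'
  rw [← hcoeff, hl] at hjirr
  exact tendsto_cesaroMean_fourierChar_rat_add l R (hl ▸ hdeg) hjirr

theorem exists_tendsto_cesaroMean_fourierChar_polynomial (P : ℝ[X]) :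
    ∃ c, Tendsto (cesaroMean fun n : ℕ => (𝐞 (P.eval (n : ℝ)) : ℂ)) atTop (𝓝 c) := by
  by_cases hP : ∃ i, 0 < i ∧ Irrational (P.coeff i)
  · obtain ⟨i, hi, hirr⟩ := hP
    exact ⟨0, tendsto_cesaroMean_fourierChar_polynomial hi hirr⟩
  have rational : ∀ i, 0 < i → P.coeff i ∈ Set.range (algebraMap ℚ ℝ) := fun i hi =>
    not_not.1 fun h => hP ⟨i, hi, h⟩
  obtain ⟨R, L, rfl, hdeg, -⟩ := exists_eq_map_add_of_coeff_mem_range rational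
  obtain ⟨q, hq, hR⟩ := exists_periodic_fourierChar_eval R
  refine exists_tendsto_cesaroMean_of_periodic hq fun n => ?_
  rw [eq_C_of_natDegree_le_zero hdeg]
  simp only [eval_add, eval_C, AddChar.map_add_eq_mul, hR n]

end Weyl

section DenseSpan

variable {E F : Type*} [NormedAddCommGroup E] [NormedSpace ℂ E] [NormedAddCommGroup F]
  [NormedSpace ℂ F] {K : ℝ} {S : Set E}

lemma tendsto_apply_of_topologicalClosure_span {α : Type*} {l : Filter α} {Φ : α → E →L[ℂ] F}
    {Ψ : E →L[ℂ] F} (hΦ : ∀ a, ‖Φ a‖ ≤ K) (hS : (Submodule.span ℂ S).topologicalClosure = ⊤)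
    (h : ∀ g ∈ S, Tendsto (fun a => Φ a g) l (𝓝 (Ψ g))) (f : E) :
    Tendsto (fun a => Φ a f) l (𝓝 (Ψ f)) := by
  have equicontinuous : Equicontinuous fun a => (Φ a : E → F) :=
    ((NormedSpace.equicontinuous_TFAE Φ).out 5 1 :
      (∃ C, ∀ a, ‖Φ a‖ ≤ C) ↔ _).1 ⟨K, hΦ⟩
  have tendsto_span : ∀ g ∈ Submodule.span ℂ S, Tendsto (fun a => Φ a g) l (𝓝 (Ψ g)) := by
    intro g hg
    induction hg using Submodule.span_induction with
    | mem g hg => exact h g hg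
    | zero => simpa using tendsto_const_nhds
    | add g₁ g₂ _ _ h₁ h₂ => simpa using h₁.add h₂
    | smul c g _ hg => simpa using hg.const_smul c
  have mem_closure : f ∈ closure (Submodule.span ℂ S : Set E) := by
    rw [← Submodule.topologicalClosure_coe, hS]
    trivial
  exact closure_minimal tendsto_span (equicontinuous.isClosed_setOfPred_tendsto Ψ.continuous)
    mem_closure

lemma exists_tendsto_apply_of_topologicalClosure_span [CompleteSpace F] {Φ : ℕ → E →L[ℂ] F}
    (hΦ : ∀ a, ‖Φ a‖ ≤ K) (hS : (Submodule.span ℂ S).topologicalClosure = ⊤)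
    (h : ∀ g ∈ S, ∃ c, Tendsto (fun n => Φ n g) atTop (𝓝 c)) (f : E) :
    ∃ c, Tendsto (fun n => Φ n f) atTop (𝓝 c) := by
  have cauchySeq_iff : ∀ u : ℕ → F,
      CauchySeq u ↔ Tendsto (fun q : ℕ × ℕ => u q.1 - u q.2) atTop (𝓝 0) := fun u => by
    simp only [cauchySeq_iff_tendsto_dist_atTop_0, dist_eq_norm]
    exact tendsto_zero_iff_norm_tendsto_zero.symm
  refine cauchySeq_tendsto_of_complete ((cauchySeq_iff _).2 ?_)
  refine tendsto_apply_of_topologicalClosure_span (Φ := fun q : ℕ × ℕ => Φ q.1 - Φ q.2) (Ψ := 0)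
    (K := K + K) (fun q => (norm_sub_le _ _).trans (add_le_add (hΦ _) (hΦ _))) hS (fun g hg => ?_) f
  obtain ⟨c, hc⟩ := h g hg
  exact (cauchySeq_iff _).1 hc.cauchySeq

end DenseSpan

section WeylCriterion

variable {X ι : Type*} [TopologicalSpace X] [CompactSpace X] [Fintype ι]

/-- The functional `G ↦ N⁻¹ ∑_{n < N} w n * G (t n)` on continuous functions. -/
noncomputable def weightedMean (w : ℕ → ℂ) (t : ℕ → X) (N : ℕ) : C(X, ℂ) →L[ℂ] ℂ :=
  cesaroMean (fun n => w n • ContinuousMap.evalCLM ℂ (t n)) N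

lemma weightedMean_apply (w : ℕ → ℂ) (t : ℕ → X) (N : ℕ) (G : C(X, ℂ)) :
    weightedMean w t N G = cesaroMean (fun n => w n * G (t n)) N := by
  simp [weightedMean, cesaroMean]

lemma norm_weightedMean_le {w : ℕ → ℂ} {K : ℝ} (hw : ∀ n, ‖w n‖ ≤ K) (t : ℕ → X) (N : ℕ) :
    ‖weightedMean w t N‖ ≤ K := by
  refine ContinuousLinearMap.opNorm_le_bound _ ((norm_nonneg _).trans (hw 0)) fun G => ?_
  rw [weightedMean_apply]
  refine norm_cesaroMean_le (fun n => ?_) N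
  rw [norm_mul]
  gcongr
  · exact (norm_nonneg _).trans (hw 0)
  · exact hw n
  · exact G.norm_coe_le_norm (t n)

/-- Integration against a finite measure, as a functional on continuous functions. -/
noncomputable def integralFunctional [MeasurableSpace X] [BorelSpace X] (μ : Measure X)
    [IsFiniteMeasure μ] : C(X, ℂ) →L[ℂ] ℂ :=
  (L1.integralCLM' ℂ).comp (ContinuousMap.toLp 1 μ ℂ)

lemma integralFunctional_apply [MeasurableSpace X] [BorelSpace X] (μ : Measure X)
    [IsFiniteMeasure μ] (G : C(X, ℂ)) : integralFunctional μ G = ∫ y, G y ∂μ := by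
  rw [integralFunctional, ContinuousLinearMap.comp_apply, ← L1.integral_eq',
    L1.integral_eq_integral]
  exact integral_congr_ae (ContinuousMap.coeFn_toLp μ G)

lemma integral_mFourier_of_ne_zero {m : ι → ℤ} (hm : m ≠ 0) :
    ∫ y : ι → AddCircle (1 : ℝ), UnitAddTorus.mFourier m y = 0 := by
  obtain ⟨i, hi⟩ := Function.ne_iff.1 hm
  have hzero : ∫ y : AddCircle (1 : ℝ), fourier (m i) y = 0 :=
    integral_eq_zero_of_add_right_eq_neg (fourier_add_half_inv_index hi one_pos)
  exact (integral_fintype_prod_volume_eq_prod (𝕜 := ℂ) fun i y => fourier (m i) y).trans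
    (Finset.prod_eq_zero (Finset.mem_univ i) hzero)

theorem tendsto_cesaroMean_mul_of_mFourier {t : ℕ → UnitAddTorus ι} {w : ℕ → ℂ} {K : ℝ}
    (hw : ∀ n, ‖w n‖ ≤ K) {L : ℂ} (hL : Tendsto (cesaroMean w) atTop (𝓝 L))
    (h : ∀ m, m ≠ 0 →
      Tendsto (cesaroMean fun n => w n * UnitAddTorus.mFourier m (t n)) atTop (𝓝 0))
    (G : C(UnitAddTorus ι, ℂ)) :
    Tendsto (cesaroMean fun n => w n * G (t n)) atTop
      (𝓝 (L * ∫ y : ι → AddCircle (1 : ℝ), G y)) := by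
  have on_characters : ∀ G ∈ Set.range UnitAddTorus.mFourier,
      Tendsto (fun N => weightedMean w t N G) atTop
        (𝓝 ((L • integralFunctional (volume : Measure (ι → AddCircle (1 : ℝ)))) G)) := by
    rintro _ ⟨m, rfl⟩
    simp only [weightedMean_apply, smul_apply, integralFunctional_apply,
      smul_eq_mul]
    rcases eq_or_ne m 0 with rfl | hm
    · have total_mass : (volume : Measure (ι → AddCircle (1 : ℝ))).real Set.univ = 1 := by
        simp [measureReal_def, volume_pi, Measure.pi_univ]
      simpa [UnitAddTorus.mFourier_zero, total_mass] using hL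
    · simpa [integral_mFourier_of_ne_zero hm] using h m hm
  simpa only [weightedMean_apply, smul_apply, integralFunctional_apply,
    smul_eq_mul] using tendsto_apply_of_topologicalClosure_span (norm_weightedMean_le hw t)
      UnitAddTorus.span_mFourier_closure_eq_top on_characters G

theorem exists_tendsto_cesaroMean_of_mFourier {t : ℕ → UnitAddTorus ι}
    (h : ∀ m, ∃ c, Tendsto (cesaroMean fun n => UnitAddTorus.mFourier m (t n)) atTop (𝓝 c))
    (f : C(UnitAddTorus ι, ℂ)) : ∃ c, Tendsto (cesaroMean fun n => f (t n)) atTop (𝓝 c) := by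
  have on_characters : ∀ G ∈ Set.range UnitAddTorus.mFourier,
      ∃ c, Tendsto (fun N => weightedMean 1 t N G) atTop (𝓝 c) := by
    rintro _ ⟨m, rfl⟩
    simpa [weightedMean_apply] using h m
  have norm_one_le : ∀ n, ‖(1 : ℕ → ℂ) n‖ ≤ 1 := fun _ => norm_one.le
  simpa [weightedMean_apply] using exists_tendsto_apply_of_topologicalClosure_span
    (norm_weightedMean_le norm_one_le t) UnitAddTorus.span_mFourier_closure_eq_top on_characters f

end WeylCriterion

section PolynomialSequences

variable {ι ι' : Type*} [Fintype ι] [Fintype ι']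

/-- The sequence of points of the torus with real polynomials as coordinates. -/
noncomputable def polynomialSequence {ι : Type*} (P : ι → ℝ[X]) (n : ℕ) : UnitAddTorus ι :=
  fun i => ((P i).eval (n : ℝ) : ℝ)

lemma mFourier_polynomialSequence (m : ι → ℤ) (P : ι → ℝ[X]) (n : ℕ) :
    UnitAddTorus.mFourier m (polynomialSequence P n) =
      𝐞 ((∑ i, m i • P i).eval (n : ℝ)) := by
  change ∏ i, fourier (m i) (((P i).eval (n : ℝ) : ℝ) : UnitAddCircle) = _
  simp only [fourier_coe_apply, Real.fourierChar_apply, ← Complex.exp_sum, eval_finsetSum,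
    zsmul_eq_mul, eval_mul, eval_intCast]
  push_cast
  rw [Finset.mul_sum, Finset.sum_mul]
  congr! 2
  ring

theorem exists_tendsto_cesaroMean_polynomialSequence {ι : Type*} [Finite ι] (P : ι → ℝ[X])
    (f : C(UnitAddTorus ι, ℂ)) :
    ∃ c, Tendsto (cesaroMean fun n => f (polynomialSequence P n)) atTop (𝓝 c) := by
  cases nonempty_fintype ι
  refine exists_tendsto_cesaroMean_of_mFourier (fun m => ?_) f
  simp only [mFourier_polynomialSequence]
  exact exists_tendsto_cesaroMean_fourierChar_polynomial _

theorem tendsto_cesaroMean_mul_polynomialSequence {P : ι → ℝ[X]} {Q : ι' → ℝ[X]}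
    (hPQ : ∀ m : ι → ℤ, m ≠ 0 → ∀ m' : ι' → ℤ,
      ∃ j, 0 < j ∧ Irrational ((∑ i, m i • P i + ∑ i, m' i • Q i).coeff j))
    (G : C(UnitAddTorus ι, ℂ)) (f : C(UnitAddTorus ι', ℂ)) {L : ℂ}
    (hL : Tendsto (cesaroMean fun n => f (polynomialSequence Q n)) atTop (𝓝 L)) :
    Tendsto (cesaroMean fun n => G (polynomialSequence P n) * f (polynomialSequence Q n)) atTop
      (𝓝 ((∫ y : ι → AddCircle (1 : ℝ), G y) * L)) := by
  have characters : ∀ m : ι → ℤ, m ≠ 0 → ∀ m' : ι' → ℤ, Tendsto (cesaroMean fun n =>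
      UnitAddTorus.mFourier m (polynomialSequence P n) *
        UnitAddTorus.mFourier m' (polynomialSequence Q n)) atTop (𝓝 0) := by
    intro m hm m'
    obtain ⟨j, hj, hirr⟩ := hPQ m hm m'
    simpa only [mFourier_polynomialSequence, ← Circle.coe_mul, ← AddChar.map_add_eq_mul,
      ← eval_add] using tendsto_cesaroMean_fourierChar_polynomial hj hirr
  simp only [mul_comm (G _)]
  rw [mul_comm]
  refine tendsto_cesaroMean_mul_of_mFourier (fun n => f.norm_coe_le_norm _) hL (fun m hm => ?_) G
  have mean_zero : Tendsto (cesaroMean fun n => UnitAddTorus.mFourier m (polynomialSequence P n))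
      atTop (𝓝 0) := by
    simpa [UnitAddTorus.mFourier_zero] using characters m hm 0
  have product_mean_zero := tendsto_cesaroMean_mul_of_mFourier
    (fun n => (UnitAddTorus.mFourier m).norm_coe_le_norm _) mean_zero
    (fun m' _ => characters m hm m') f
  simpa only [zero_mul, mul_comm] using product_mean_zero

end PolynomialSequences

section UnipotentOrbits

lemma eq_sum_choose_of_fwdDiff_iter_eq_zero {V : Type*} [AddCommGroup V] {u : ℕ → V} {ℓ : ℕ}
    (hu : (Δ_[1])^[ℓ + 1] u = 0) (n : ℕ) :
    u n = ∑ j ∈ Finset.range (ℓ + 1), n.choose j • (Δ_[1])^[j] u 0 := by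
  have higher_eq_zero : ∀ j, ℓ < j → (Δ_[1])^[j] u = 0 := fun j hj => by
    obtain ⟨i, rfl⟩ := Nat.exists_eq_add_of_le' (Nat.succ_le_of_lt hj)
    rw [Function.iterate_add_apply, hu]
    exact Function.iterate_fixed (fwdDiff_const 1 0) i
  have newton := shift_eq_sum_fwdDiff_iter 1 u n 0
  rw [zero_add, smul_eq_mul, mul_one] at newton
  rw [newton]
  rcases le_total n ℓ with hn | hn
  · refine Finset.sum_subset (Finset.range_mono (Nat.succ_le_succ hn)) fun j _ hj => ?_
    rw [Nat.choose_eq_zero_of_lt (by simpa using hj), zero_smul]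
  · refine (Finset.sum_subset (Finset.range_mono (Nat.succ_le_succ hn)) fun j _ hj => ?_).symm
    rw [higher_eq_zero j (by simpa using hj), Pi.zero_apply, smul_zero]

lemma fwdDiff_iter_pow_smul {A V : Type*} [Ring A] [AddCommGroup V] [Module A V] (M : A) (v : V)
    (j : ℕ) : (Δ_[1])^[j] (fun n : ℕ => M ^ n • v) = fun n => M ^ n • (M - 1) ^ j • v := by
  induction j with
  | zero => simp
  | succ j ih =>
    rw [Function.iterate_succ_apply', ih]
    ext n
    rw [fwdDiff, pow_succ M, mul_smul, ← smul_sub, pow_succ', mul_smul (M - 1), sub_smul M,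
      one_smul]

lemma fwdDiff_iterate_affine {A V : Type*} [Ring A] [AddCommGroup V] [Module A V] (M : A)
    (b x : V) : Δ_[1] (fun n => (fun y => b + M • y)^[n] x) =
      fun n => M ^ n • ((M - 1) • x + b) := by
  have iterate_succ : ∀ m, (fun y => b + M • y)^[m + 1] x = b + M • (fun y => b + M • y)^[m] x :=
    fun m => Function.iterate_succ_apply' _ m x
  ext n
  induction n with
  | zero =>
    rw [fwdDiff, zero_add, Function.iterate_one, Function.iterate_zero_apply, pow_zero, one_smul,
      sub_smul, one_smul, sub_add_eq_add_sub, add_comm b]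
  | succ n ih =>
    rw [fwdDiff] at ih ⊢
    rw [iterate_succ (n + 1), iterate_succ n, add_sub_add_left_eq_sub, ← iterate_succ n,
      ← smul_sub, ih, smul_smul, pow_succ']

lemma fwdDiff_iter_iterate_unipotent {A V : Type*} [Ring A] [AddCommGroup V] [Module A V] {M : A}
    {ℓ : ℕ} (hM : (M - 1) ^ ℓ = 0) (b x : V) :
    (Δ_[1])^[ℓ + 1] (fun n => (fun y => b + M • y)^[n] x) = 0 := by
  rw [Function.iterate_succ_apply, fwdDiff_iterate_affine, fwdDiff_iter_pow_smul, hM]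
  simp only [zero_smul, smul_zero]
  rfl

-- Lift the `a j` to real numbers: `n.choose j` is a real polynomial of degree `j` in `n`.
lemma exists_polynomial_eq_sum_choose (ℓ : ℕ) {T : ℝ} (a : ℕ → AddCircle T) :
    ∃ p : ℝ[X], p.natDegree ≤ ℓ ∧ ∀ n : ℕ,
      ((p.eval (n : ℝ) : ℝ) : AddCircle T) = ∑ j ∈ Finset.range (ℓ + 1), n.choose j • a j := by
  choose r hr using fun θ : AddCircle T => QuotientAddGroup.mk_surjective θ
  refine ⟨∑ j ∈ Finset.range (ℓ + 1), C (r (a j) / j.factorial) * descPochhammer ℝ j,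
    natDegree_sum_le_of_forall_le _ _ fun j hj => ?_, fun n => ?_⟩
  · refine (natDegree_C_mul_le _ _).trans ?_
    rw [descPochhammer_natDegree]
    exact Finset.mem_range_succ_iff.1 hj
  · have eval_term : ∀ j, (C (r (a j) / j.factorial) * descPochhammer ℝ j).eval (n : ℝ) =
        n.choose j • r (a j) := fun j => by
      rw [eval_mul, eval_C, nsmul_eq_mul, Nat.cast_choose_eq_descPochhammer_div]
      ring
    have coe_sum := map_sum (QuotientAddGroup.mk' (AddSubgroup.zmultiples T))
      (fun j => n.choose j • r (a j)) (Finset.range (ℓ + 1))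
    rw [eval_finsetSum, Finset.sum_congr rfl fun j _ => eval_term j]
    refine coe_sum.trans (Finset.sum_congr rfl fun j _ => ?_)
    rw [map_nsmul, QuotientAddGroup.mk'_apply, hr]

open scoped Matrix.Module in
theorem exists_polynomialSequence_eq_iterate {ι : Type*} [Fintype ι] [DecidableEq ι]
    {M : Matrix ι ι ℤ} {ℓ : ℕ} (hM : (M - 1) ^ ℓ = 0) (b x : UnitAddTorus ι) :
    ∃ P : ι → ℝ[X], (∀ i, (P i).natDegree ≤ ℓ) ∧ ∀ n : ℕ,
      (fun y (i : ι) => b i + ∑ j, M i j • y j)^[n] x = polynomialSequence P n := by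
  set u : ℕ → UnitAddTorus ι := fun n => (fun y (i : ι) => b i + ∑ j, M i j • y j)^[n] x
  have newton := eq_sum_choose_of_fwdDiff_iter_eq_zero (u := u)
    (fwdDiff_iter_iterate_unipotent hM b x)
  choose P hdeg hP using fun i =>
    exists_polynomial_eq_sum_choose ℓ fun j => ((Δ_[1])^[j] u 0 : UnitAddTorus ι) i
  refine ⟨P, hdeg, fun n => (newton n).trans (funext fun i => ?_)⟩
  rw [Finset.sum_apply]
  exact (hP i n).symm

lemma polynomialSequence_expand {ι : Type*} (P : ι → ℝ[X]) (k n : ℕ) :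
    polynomialSequence (fun i => expand ℝ k (P i)) n = polynomialSequence P (n ^ k) := by
  funext i
  simp only [polynomialSequence, expand_eval, Nat.cast_pow]

end UnipotentOrbits

section Exponents

variable {ι : Type*} [Fintype ι] {ℓ k : ℕ} {κ : ι → ℕ}

lemma coeff_expand_eq_zero {R : Type*} [CommSemiring R] {p : R[X]} {j : ℕ} (hk : 0 < k)
    (hp : p.natDegree ≤ ℓ) (hj : ¬k ∣ j ∨ ℓ * k < j) : (expand R k p).coeff j = 0 := by
  rcases hj with hj | hj
  · rw [coeff_expand hk, if_neg hj]
  · refine coeff_eq_zero_of_natDegree_lt ?_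
    rw [natDegree_expand]
    exact (Nat.mul_le_mul_right k hp).trans_lt hj

/-- The integer polynomial `∑ i, m i (X ^ (ℓ κ i) + X ^ κ i)`: multiplied by `β`, the phase of the
character `m` along the points with coordinates `(n ^ (ℓ κ i) + n ^ κ i) β`. -/
noncomputable def phasePolynomial (ℓ : ℕ) (κ : ι → ℕ) (m : ι → ℤ) : ℤ[X] :=
  ∑ i, m i • (X ^ (ℓ * κ i) + X ^ κ i)

lemma coeff_phasePolynomial (ℓ : ℕ) (κ : ι → ℕ) (m : ι → ℤ) (j : ℕ) :
    (phasePolynomial ℓ κ m).coeff j =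
      ∑ i, m i * ((if j = ℓ * κ i then 1 else 0) + if j = κ i then 1 else 0) := by
  simp only [phasePolynomial, finsetSum_coeff, coeff_smul, coeff_add, coeff_X_pow, smul_eq_mul]

lemma coeff_phasePolynomial_ne_zero_of_unique {m : ι → ℤ} {i₀ : ι} {j : ℕ} (hi₀ : m i₀ ≠ 0)
    (hj : j = ℓ * κ i₀ ∨ j = κ i₀)
    (hne : ∀ i, m i ≠ 0 → i ≠ i₀ → j ≠ ℓ * κ i ∧ j ≠ κ i) :
    (phasePolynomial ℓ κ m).coeff j ≠ 0 := by
  rw [coeff_phasePolynomial, Finset.sum_eq_single i₀]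
  · refine mul_ne_zero hi₀ ?_
    rcases hj with hj | hj <;> rw [if_pos hj] <;> split_ifs <;> decide
  · intro i _ hi
    by_cases hmi : m i = 0
    · rw [hmi, zero_mul]
    · rw [if_neg (hne i hmi hi).1, if_neg (hne i hmi hi).2, add_zero, mul_zero]
  · exact fun h => absurd (Finset.mem_univ i₀) h

-- If some `κ i` with `m i ≠ 0` exceeds `k`, the largest `ℓ κ i` is out of reach for a polynomial of
-- degree `ℓ` in `X ^ k`; otherwise the smallest `κ i` is less than `k`, so `k` does not divide it.
lemma exists_coeff_phasePolynomial_ne_zero (hℓ : 0 < ℓ) (hκ : ∀ i, 0 < κ i)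
    (hκinj : Function.Injective κ) (hκk : ∀ i, κ i ≠ k) {m : ι → ℤ} (hm : m ≠ 0) :
    ∃ j, 0 < j ∧ (phasePolynomial ℓ κ m).coeff j ≠ 0 ∧ (¬k ∣ j ∨ ℓ * k < j) := by
  set active : Finset ι := Finset.univ.filter fun i => m i ≠ 0
  have mem_active : ∀ {i}, i ∈ active ↔ m i ≠ 0 := Finset.mem_filter_univ _
  have active_nonempty : active.Nonempty :=
    (Function.ne_iff.1 hm).imp fun _ => mem_active.2
  have le_mul : ∀ i, κ i ≤ ℓ * κ i := fun i => Nat.le_mul_of_pos_left _ hℓ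
  by_cases hbig : ∃ i ∈ active, k < κ i
  · obtain ⟨i₀, hi₀, hmax⟩ := active.exists_max_image κ active_nonempty
    obtain ⟨i₁, hi₁, hk₁⟩ := hbig
    refine ⟨ℓ * κ i₀, Nat.mul_pos hℓ (hκ i₀), ?_,
      Or.inr (Nat.mul_lt_mul_of_pos_left (hk₁.trans_le (hmax i₁ hi₁)) hℓ)⟩
    refine coeff_phasePolynomial_ne_zero_of_unique (mem_active.1 hi₀) (Or.inl rfl)
      fun i hi hne => ?_
    have hlt : κ i < κ i₀ := (hmax i (mem_active.2 hi)).lt_of_ne (hκinj.ne hne)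
    exact ⟨(Nat.mul_lt_mul_of_pos_left hlt hℓ).ne', (hlt.trans_le (le_mul i₀)).ne'⟩
  · push Not at hbig
    obtain ⟨i₀, hi₀, hmin⟩ := active.exists_min_image κ active_nonempty
    have hlt_k : κ i₀ < k := (hbig i₀ hi₀).lt_of_ne (hκk i₀)
    refine ⟨κ i₀, hκ i₀, ?_, Or.inl (Nat.not_dvd_of_pos_of_lt (hκ i₀) hlt_k)⟩
    refine coeff_phasePolynomial_ne_zero_of_unique (mem_active.1 hi₀) (Or.inr rfl)
      fun i hi hne => ?_
    have hlt : κ i₀ < κ i := (hmin i (mem_active.2 hi)).lt_of_ne (hκinj.ne hne.symm)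
    exact ⟨(hlt.trans_le (le_mul i)).ne, hlt.ne⟩

lemma sum_smul_mul_C_eq_phasePolynomial (β : ℝ) (ℓ : ℕ) (κ : ι → ℕ) (m : ι → ℤ) :
    ∑ i, m i • ((X ^ (ℓ * κ i) + X ^ κ i) * C β) =
      (phasePolynomial ℓ κ m).map (Int.castRingHom ℝ) * C β := by
  rw [← coe_mapRingHom]
  simp only [phasePolynomial, map_sum, map_zsmul, map_add, map_pow, coe_mapRingHom, map_X,
    Finset.sum_mul, smul_mul_assoc]

theorem exists_irrational_coeff_sum_add_expand {ι' : Type*} [Fintype ι'] (hℓ : 0 < ℓ)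
    (hk : 0 < k) (hκ : ∀ i, 0 < κ i) (hκinj : Function.Injective κ) (hκk : ∀ i, κ i ≠ k)
    {β : ℝ} (hβ : Irrational β) {p : ι' → ℝ[X]} (hp : ∀ i, (p i).natDegree ≤ ℓ)
    {m : ι → ℤ} (hm : m ≠ 0) (m' : ι' → ℤ) :
    ∃ j, 0 < j ∧ Irrational ((∑ i, m i • ((X ^ (ℓ * κ i) + X ^ κ i) * C β) +
      ∑ i, m' i • expand ℝ k (p i)).coeff j) := by
  obtain ⟨j, hj, hcoeff, hfar⟩ := exists_coeff_phasePolynomial_ne_zero hℓ hκ hκinj hκk hm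
  refine ⟨j, hj, ?_⟩
  have hzero : (∑ i, m' i • expand ℝ k (p i)).coeff j = 0 := by
    simp only [finsetSum_coeff, coeff_smul, coeff_expand_eq_zero hk (hp _) hfar, smul_zero,
      Finset.sum_const_zero]
  rw [coeff_add, hzero, add_zero, sum_smul_mul_C_eq_phasePolynomial, coeff_mul_C, coeff_map,
    eq_intCast]
  exact hβ.intCast_mul hcoeff

end Exponents

section PeriodicProducts

theorem exists_continuousMap_eq_prod_periodic {σ : Type*} [Fintype σ] {h : σ → ℝ → ℂ}
    (h_cont : ∀ i, Continuous (h i)) (h_per : ∀ i, Function.Periodic (h i) 1) :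
    ∃ G : C(UnitAddTorus σ, ℂ), (∀ t : σ → ℝ, G (fun i => t i) = ∏ i, h i (t i)) ∧
      ∫ y : σ → AddCircle (1 : ℝ), G y = ∏ i, ∫ t in (0 : ℝ)..1, h i t := by
  let g : σ → AddCircle (1 : ℝ) → ℂ := fun i => (h_per i).lift
  have g_cont : ∀ i, Continuous (g i) := fun i => continuous_quot_lift _ (h_cont i)
  refine ⟨⟨fun y => ∏ i, g i (y i), continuous_finsetProd _ fun i _ =>
    (g_cont i).comp (continuous_apply i)⟩, fun t => rfl,
    (integral_fintype_prod_volume_eq_prod (𝕜 := ℂ) g).trans (Finset.prod_congr rfl fun i _ => ?_)⟩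
  rw [← AddCircle.intervalIntegral_preimage 1 0 (g i), zero_add]
  rfl

end PeriodicProducts

theorem statement13 (ℓ d : ℕ) (hℓ : 0 < ℓ) (hd : 0 < d)
    (M : Matrix (Fin d) (Fin d) ℤ) (b : Fin d → AddCircle (1 : ℝ))
    (hM : (M - 1) ^ ℓ = 0)
    (β : ℝ) (hβ : Irrational β)
    (s : ℕ) (k : ℕ) (κ : Fin s → ℕ)
    (hk : 0 < k) (hκ : ∀ i, 0 < κ i)
    (hκinj : Function.Injective κ) (hκk : ∀ i, κ i ≠ k)
    (x : Fin d → AddCircle (1 : ℝ))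
    (f : (Fin d → AddCircle (1 : ℝ)) → ℂ) (hf : Continuous f)
    (h : Fin s → ℝ → ℂ) (h_cont : ∀ i, Continuous (h i))
    (h_per : ∀ i, Function.Periodic (h i) 1) :
    ∃ L : ℂ,
      Tendsto (fun N : ℕ => (N : ℂ)⁻¹ * ∑ n ∈ Finset.Icc 1 N,
          f ((fun y (i : Fin d) => b i + ∑ j, M i j • y j)^[n ^ k] x))
        atTop (nhds L) ∧
      Tendsto (fun N : ℕ => (N : ℂ)⁻¹ * ∑ n ∈ Finset.Icc 1 N,
          (∏ i, h i (((n : ℝ) ^ (ℓ * κ i) + (n : ℝ) ^ (κ i)) * β)) *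
            f ((fun y (i : Fin d) => b i + ∑ j, M i j • y j)^[n ^ k] x))
        atTop (nhds ((∏ i, ∫ t in (0:ℝ)..1, h i t) * L)) := by
  obtain ⟨p, hdeg, orbit_eq⟩ := exists_polynomialSequence_eq_iterate hM b x
  obtain ⟨G, G_coe, integral_G⟩ := exists_continuousMap_eq_prod_periodic h_cont h_per
  let F : C(UnitAddTorus (Fin d), ℂ) := ⟨f, hf⟩
  let P : Fin s → ℝ[X] := fun i => (X ^ (ℓ * κ i) + X ^ κ i) * C β
  let Q : Fin d → ℝ[X] := fun i => expand ℝ k (p i)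
  have F_orbit : ∀ n : ℕ, F (polynomialSequence Q n) =
      f ((fun y (i : Fin d) => b i + ∑ j, M i j • y j)^[n ^ k] x) := fun n => by
    rw [orbit_eq, ← polynomialSequence_expand]
    rfl
  have G_sequence : ∀ n : ℕ, G (polynomialSequence P n) =
      ∏ i, h i (((n : ℝ) ^ (ℓ * κ i) + (n : ℝ) ^ (κ i)) * β) := fun n =>
    (G_coe _).trans (by simp only [P, eval_mul, eval_add, eval_pow, eval_X, eval_C])
  obtain ⟨L, hL⟩ := exists_tendsto_cesaroMean_polynomialSequence Q F
  have hprod := tendsto_cesaroMean_mul_polynomialSequence (P := P) (Q := Q)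
    (fun _ hm => exists_irrational_coeff_sum_add_expand hℓ hk hκ hκinj hκk hβ hdeg hm) G F hL
  refine ⟨L, ?_, ?_⟩
  · simpa only [F_orbit] using tendsto_inv_mul_sum_Icc (fun n => F.norm_coe_le_norm _) hL
  · rw [← integral_G]
    simpa only [F_orbit, G_sequence] using tendsto_inv_mul_sum_Icc
      (fun n => norm_mul_le_of_le (G.norm_coe_le_norm _) (F.norm_coe_le_norm _)) hprod
end
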